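/- arXiv:1312.7860 — 2 statements merged into one kernel-verified Lean document; each statement's English description precedes it below -/
import Mathlib

section
/- Let Φ : ℝ → ℝ be the standard normal CDF. If k > √(2π), then there exists b ∈ ℝ such that the equation Φ(k·θ + b) = θ has at least three distinct solutions θ in the open interval (0,1). -/
/-- The standard normal cumulative distribution function. -/
noncomputable def stdNormalCDF (x : ℝ) : ℝ :=
  ∫ t in Set.Iic x, (Real.sqrt (2 * Real.pi))⁻¹ * Real.exp (-t ^ 2 / 2)

noncomputable def pdfN (t : ℝ) : ℝ := (Real.sqrt (2 * Real.pi))⁻¹ * Real.exp (-t ^ 2 / 2)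

lemma pdfN_eq : pdfN = fun t => (Real.sqrt (2 * Real.pi))⁻¹ * Real.exp (-(1/2) * t ^ 2) := by
  funext t
  unfold pdfN
  congr 2
  ring

lemma sqrt_pos' : 0 < Real.sqrt (2 * Real.pi) := Real.sqrt_pos.mpr (by positivity)

lemma pdfN_pos (t : ℝ) : 0 < pdfN t := mul_pos (inv_pos.mpr sqrt_pos') (Real.exp_pos _)

lemma pdfN_int : MeasureTheory.Integrable pdfN := by
  rw [pdfN_eq]
  exact (integrable_exp_neg_mul_sq (by norm_num)).const_mul _

lemma pdfN_cont : Continuous pdfN := by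
  unfold pdfN
  fun_prop

lemma pdfN_total : ∫ t, pdfN t = 1 := by
  rw [pdfN_eq, MeasureTheory.integral_const_mul, integral_gaussian]
  rw [show Real.pi / (1/2) = 2 * Real.pi by ring]
  exact inv_mul_cancel₀ sqrt_pos'.ne'

lemma cdfN_eq (x : ℝ) : stdNormalCDF x = ∫ t in Set.Iic x, pdfN t := rfl

lemma cdfN_symm (x : ℝ) : stdNormalCDF x + stdNormalCDF (-x) = 1 := by
  have h : stdNormalCDF (-x) = ∫ t in Set.Ioi x, pdfN t := by
    have := integral_comp_neg_Iic (-x) pdfN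
    rw [neg_neg] at this
    rw [← this, cdfN_eq]
    congr 1
    funext t
    simp [pdfN]
  rw [h, cdfN_eq, ← pdfN_total]
  exact intervalIntegral.integral_Iic_add_Ioi pdfN_int.integrableOn pdfN_int.integrableOn

lemma cdfN_pos (x : ℝ) : 0 < stdNormalCDF x := by
  rw [cdfN_eq, MeasureTheory.setIntegral_pos_iff_support_of_nonneg_ae
    (Filter.Eventually.of_forall fun t => (pdfN_pos t).le) pdfN_int.integrableOn]
  have : Function.support pdfN = Set.univ := by
    ext t
    simp [(pdfN_pos t).ne']
  rw [this]
  simp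

lemma cdfN_deriv (x : ℝ) : HasDerivAt stdNormalCDF (pdfN x) x := by
  have h : stdNormalCDF = fun y => stdNormalCDF 0 + ∫ t in (0:ℝ)..y, pdfN t := by
    funext y
    have := intervalIntegral.integral_Iic_sub_Iic (a := 0) (b := y)
      (pdfN_int.integrableOn) (pdfN_int.integrableOn)
    rw [← this, ← cdfN_eq, ← cdfN_eq]
    ring
  rw [h]
  exact (intervalIntegral.integral_hasDerivAt_right (pdfN_cont.intervalIntegrable _ _)
    (pdfN_cont.stronglyMeasurableAtFilter _ _) pdfN_cont.continuousAt).const_add _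

theorem stmt_1 (k : ℝ) (hk : k > Real.sqrt (2 * Real.pi)) :
    ∃ b : ℝ, ∃ θ₁ θ₂ θ₃ : ℝ,
      θ₁ ∈ Set.Ioo (0 : ℝ) 1 ∧ θ₂ ∈ Set.Ioo (0 : ℝ) 1 ∧ θ₃ ∈ Set.Ioo (0 : ℝ) 1 ∧
      θ₁ ≠ θ₂ ∧ θ₁ ≠ θ₃ ∧ θ₂ ≠ θ₃ ∧
      stdNormalCDF (k * θ₁ + b) = θ₁ ∧
      stdNormalCDF (k * θ₂ + b) = θ₂ ∧
      stdNormalCDF (k * θ₃ + b) = θ₃ := by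
  have h0 : stdNormalCDF 0 = 1 / 2 := by
    have := cdfN_symm 0
    rw [neg_zero] at this
    linarith
  let g : ℝ → ℝ := fun θ => stdNormalCDF (k * θ + -(k / 2)) - θ
  have hd : ∀ θ, HasDerivAt g (pdfN (k * θ + -(k / 2)) * k - 1) θ := by
    intro θ
    have h1 : HasDerivAt (fun θ : ℝ => k * θ + -(k / 2)) k θ := by
      simpa using ((hasDerivAt_id θ).const_mul k).add_const (-(k / 2))
    exact ((cdfN_deriv _).comp θ h1).sub (hasDerivAt_id θ)
  have hc : Continuous g := continuous_iff_continuousAt.mpr fun θ => (hd θ).continuousAt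
  have hhalf : k * (1 / 2) + -(k / 2) = 0 := by ring
  have gh : g (1 / 2) = 0 := by
    simp only [g]
    rw [hhalf, h0, sub_self]
  have g0 : 0 < g 0 := by
    simp only [g, sub_zero]
    exact cdfN_pos _
  have hpos : 0 < pdfN (k * (1 / 2) + -(k / 2)) * k - 1 := by
    rw [hhalf]
    have : pdfN 0 = (Real.sqrt (2 * Real.pi))⁻¹ := by simp [pdfN]
    rw [this, sub_pos, ← div_eq_inv_mul, one_lt_div sqrt_pos']
    exact hk
  obtain ⟨c, hc0, hc1, hgc⟩ : ∃ c, 0 < c ∧ c < 1 / 2 ∧ g c < 0 := by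
    have h1 := (hasDerivAt_iff_tendsto_slope.mp (hd (1 / 2))).eventually (lt_mem_nhds hpos)
    have h2 : ∀ᶠ y in nhdsWithin (1 / 2 : ℝ) (Set.Iio (1 / 2)), 0 < slope g (1 / 2) y :=
      h1.filter_mono (nhdsWithin_mono _ fun y hy => ne_of_lt hy)
    have h3 : ∀ᶠ y in nhdsWithin (1 / 2 : ℝ) (Set.Iio (1 / 2)), y ∈ Set.Ioo (0:ℝ) (1 / 2) :=
      Ioo_mem_nhdsLT (by norm_num)
    obtain ⟨c, hs, hc0, hc1⟩ := (h2.and h3).exists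
    refine ⟨c, hc0, hc1, ?_⟩
    rw [slope_def_field, gh, sub_zero] at hs
    by_contra hn
    exact absurd hs (not_lt.mpr (div_nonpos_of_nonneg_of_nonpos (not_lt.mp hn) (by linarith)))
  obtain ⟨θ, ⟨ht0, ht1⟩, hgt⟩ := intermediate_value_Ioo' hc0.le hc.continuousOn
    (show (0:ℝ) ∈ Set.Ioo (g c) (g 0) from ⟨hgc, g0⟩)
  have e1 : stdNormalCDF (k * θ + -(k / 2)) = θ := sub_eq_zero.mp hgt
  refine ⟨-(k / 2), θ, 1 / 2, 1 - θ, ⟨ht0, by linarith⟩, by norm_num,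
    ⟨by linarith, by linarith⟩, by linarith, ?_, ?_, e1, sub_eq_zero.mp gh, ?_⟩
  · intro h; linarith
  · intro h; linarith
  · have := cdfN_symm (k * θ + -(k / 2))
    rw [show k * (1 - θ) + -(k / 2) = -(k * θ + -(k / 2)) by ring]
    linarith
end

section
/- Let α_p > 0, α_z ≥ 0 and σ_μ ≥ 0 satisfy σ_μ·(1/(1 + α_z/α_p)) > 1/√(2π). Then for every α_x ≥ 0, setting α = α_x + α_p + α_z and α_ψ = α²/(α_x + α_p²·σ_μ²), for every Z ∈ ℝ, x_c ∈ ℝ and m ∈ ℝ the equation Φ(√α_ψ·(((α_z + α_p)/α)·θ − (α_z/α)·Z − (α_p/α)·m − x_c/√α)) = θ has exactly one real solution θ*, and θ* ∈ (0,1). -/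
open MeasureTheory in
lemma aux_int : Integrable (fun t : ℝ => (Real.sqrt (2 * Real.pi))⁻¹ * Real.exp (-t ^ 2 / 2)) := by
  have := (integrable_exp_neg_mul_sq (b := 1/2) (by norm_num)).const_mul (Real.sqrt (2 * Real.pi))⁻¹
  refine this.congr (Filter.Eventually.of_forall fun t => ?_)
  simp only
  congr 2
  ring

lemma aux_total : ∫ t : ℝ, (Real.sqrt (2 * Real.pi))⁻¹ * Real.exp (-t ^ 2 / 2) = 1 := by
  have h := integral_gaussian (1/2)
  have e : (fun t : ℝ => Real.exp (-t ^ 2 / 2)) = fun t : ℝ => Real.exp (-(1/2) * t ^ 2) := by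
    funext t
    congr 1
    ring
  rw [MeasureTheory.integral_const_mul, e, h]
  have : Real.pi / (1/2) = 2 * Real.pi := by ring
  rw [this]
  have : 0 < Real.sqrt (2 * Real.pi) := Real.sqrt_pos.2 (by positivity)
  field_simp

lemma aux_sub (a b : ℝ) : stdNormalCDF b - stdNormalCDF a =
    ∫ t in a..b, (Real.sqrt (2 * Real.pi))⁻¹ * Real.exp (-t ^ 2 / 2) :=
  intervalIntegral.integral_Iic_sub_Iic aux_int.integrableOn aux_int.integrableOn

lemma aux_lip (a b : ℝ) : |stdNormalCDF b - stdNormalCDF a| ≤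
    (Real.sqrt (2 * Real.pi))⁻¹ * |b - a| := by
  rw [aux_sub, ← Real.norm_eq_abs]
  apply intervalIntegral.norm_integral_le_of_norm_le_const
  intro t _
  rw [Real.norm_eq_abs, abs_of_nonneg (by positivity)]
  apply mul_le_of_le_one_right (by positivity)
  rw [Real.exp_le_one_iff]
  nlinarith [sq_nonneg t]

lemma aux_lt {a b : ℝ} (hab : a < b) : stdNormalCDF a < stdNormalCDF b := by
  rw [← sub_pos, aux_sub]
  apply intervalIntegral.intervalIntegral_pos_of_pos aux_int.intervalIntegrable _ hab
  intro t
  have : 0 < Real.sqrt (2 * Real.pi) := Real.sqrt_pos.2 (by positivity)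
  positivity

lemma aux_pos (a : ℝ) : 0 < stdNormalCDF a := by
  refine lt_of_le_of_lt ?_ (aux_lt (sub_one_lt a))
  exact MeasureTheory.integral_nonneg fun t => by positivity

lemma aux_lt_one (a : ℝ) : stdNormalCDF a < 1 := by
  refine lt_of_lt_of_le (aux_lt (lt_add_one a)) ?_
  rw [← aux_total]
  exact MeasureTheory.setIntegral_le_integral aux_int
    (Filter.Eventually.of_forall fun t => by positivity)

lemma aux_cont : Continuous stdNormalCDF := by
  have : LipschitzWith (Real.toNNReal (Real.sqrt (2 * Real.pi))⁻¹) stdNormalCDF := by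
    apply LipschitzWith.of_dist_le_mul
    intro x y
    rw [Real.coe_toNNReal _ (by positivity), Real.dist_eq, Real.dist_eq]
    exact aux_lip y x
  exact this.continuous

lemma aux_main (k c : ℝ) (hk0 : 0 ≤ k) (hk : k < Real.sqrt (2 * Real.pi)) :
    ∃ θ ∈ Set.Ioo (0 : ℝ) 1, stdNormalCDF (k * θ + c) = θ ∧
      ∀ θ' : ℝ, stdNormalCDF (k * θ' + c) = θ' → θ' = θ := by
  have hs : 0 < Real.sqrt (2 * Real.pi) := Real.sqrt_pos.2 (by positivity)
  have hc : ContinuousOn (fun θ : ℝ => θ - stdNormalCDF (k * θ + c)) (Set.Icc 0 1) := by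
    have := aux_cont
    fun_prop
  obtain ⟨θ, -, hθ⟩ := intermediate_value_Icc (zero_le_one' ℝ) hc (show (0:ℝ) ∈ _ from
    ⟨by have := aux_pos (k * 0 + c); linarith, by have := aux_lt_one (k * 1 + c); linarith⟩)
  have hθ' : stdNormalCDF (k * θ + c) = θ := by simp only at hθ; linarith
  refine ⟨θ, ⟨?_, ?_⟩, hθ', fun θ' h' => ?_⟩
  · rw [← hθ']; exact aux_pos _
  · rw [← hθ']; exact aux_lt_one _
  · by_contra hne
    have hp : 0 < |θ' - θ| := abs_pos.2 (sub_ne_zero.2 hne)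
    have hl := aux_lip (k * θ + c) (k * θ' + c)
    rw [h', hθ', show k * θ' + c - (k * θ + c) = k * (θ' - θ) by ring, abs_mul,
      abs_of_nonneg hk0, ← mul_assoc] at hl
    have : (Real.sqrt (2 * Real.pi))⁻¹ * k < 1 := by
      rw [inv_mul_lt_iff₀ hs]; linarith
    nlinarith

theorem stmt_7 (αp αz σμ : ℝ) (hαp : 0 < αp) (hαz : 0 ≤ αz) (hσμ : 0 ≤ σμ)
    (h : σμ * (1 / (1 + αz / αp)) > 1 / Real.sqrt (2 * Real.pi)) :
    ∀ αx : ℝ, 0 ≤ αx →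
      ∀ α αψ : ℝ, α = αx + αp + αz → αψ = α ^ 2 / (αx + αp ^ 2 * σμ ^ 2) →
        ∀ Z xc m : ℝ,
          ∃ θ ∈ Set.Ioo (0 : ℝ) 1,
            stdNormalCDF (Real.sqrt αψ *
              (((αz + αp) / α) * θ - (αz / α) * Z - (αp / α) * m - xc / Real.sqrt α)) = θ ∧
            ∀ θ' : ℝ,
              stdNormalCDF (Real.sqrt αψ *
                (((αz + αp) / α) * θ' - (αz / α) * Z - (αp / α) * m -
                  xc / Real.sqrt α)) = θ' →
              θ' = θ := by
  intro αx hx α αψ hα hψ Z xc m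
  have hs : 0 < Real.sqrt (2 * Real.pi) := Real.sqrt_pos.2 (by positivity)
  have hαpos : 0 < α := by linarith
  have h1 : αp + αz < σμ * αp * Real.sqrt (2 * Real.pi) := by
    have e : σμ * (1 / (1 + αz / αp)) = σμ * αp / (αp + αz) := by field_simp
    rw [e, gt_iff_lt, div_lt_div_iff₀ hs (by linarith)] at h
    linarith
  have hσ : 0 < σμ := by
    rcases hσμ.lt_or_eq with h0 | h0
    · exact h0
    · rw [← h0] at h1; simp at h1; linarith
  have hD : αp * σμ ≤ Real.sqrt (αx + αp ^ 2 * σμ ^ 2) := by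
    apply Real.le_sqrt_of_sq_le
    nlinarith
  have hDpos : 0 < αp * σμ := by positivity
  have hk : Real.sqrt αψ * ((αz + αp) / α) < Real.sqrt (2 * Real.pi) := by
    rw [hψ, Real.sqrt_div (by positivity), Real.sqrt_sq hαpos.le,
      show ∀ D : ℝ, α / D * ((αz + αp) / α) = (αz + αp) / D from fun D => by field_simp,
      div_lt_iff₀ (by linarith)]
    nlinarith
  have key := aux_main (Real.sqrt αψ * ((αz + αp) / α))
    (Real.sqrt αψ * (- (αz / α) * Z - (αp / α) * m - xc / Real.sqrt α)) (by positivity) hk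
  have e : ∀ θ : ℝ, Real.sqrt αψ *
      (((αz + αp) / α) * θ - (αz / α) * Z - (αp / α) * m - xc / Real.sqrt α) =
      Real.sqrt αψ * ((αz + αp) / α) * θ +
      Real.sqrt αψ * (- (αz / α) * Z - (αp / α) * m - xc / Real.sqrt α) := fun θ => by ring
  simp only [e]
  exact key
end
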